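/- Let n : ℕ and let ⟨·,·⟩ denote the Minkowski bilinear form on ℝ^{n+1}. Suppose K, D, F, G, N, Γ : Fin (n+1) → ℝ satisfy ⟨K,K⟩ = −4, ⟨K,D⟩ = 0, ⟨D,D⟩ = 14, ⟨K,F⟩ = −2, ⟨D,F⟩ = 4, ⟨F,F⟩ = 0, ⟨K,G⟩ = −1, ⟨D,G⟩ = 1, ⟨G,G⟩ = −1, ⟨F,G⟩ = 0, ⟨K,N⟩ = 0, ⟨D,N⟩ = 0, ⟨F,N⟩ = 0, ⟨G,N⟩ = 1, ⟨N,N⟩ = −2, ⟨K,Γ⟩ = 4, ⟨D,Γ⟩ = 6, ⟨F,Γ⟩ = 4, ⟨G,Γ⟩ = 1, ⟨N,Γ⟩ = 0 and ⟨Γ,Γ⟩ = −2. Then Γ = −2·K + F + 2·G + N. -/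

import Mathlib

/-- The Minkowski (Lorentzian) bilinear form on `ℝ^{n+1}`:
`⟨x, y⟩ = x 0 * y 0 - ∑_{i=1}^{n} x i * y i`. -/
def mink (n : ℕ) (x y : Fin (n + 1) → ℝ) : ℝ :=
  x 0 * y 0 - ∑ i ∈ Finset.Ioi (0 : Fin (n + 1)), x i * y i

theorem mink_comm' (n : ℕ) (x y : Fin (n + 1) → ℝ) : mink n x y = mink n y x := by
  simp only [mink, mul_comm]

theorem mink_add_left' (n : ℕ) (x y z : Fin (n + 1) → ℝ) :
    mink n (x + y) z = mink n x z + mink n y z := by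
  simp only [mink, Pi.add_apply, add_mul, Finset.sum_add_distrib]; ring

theorem mink_smul_left' (n : ℕ) (c : ℝ) (x z : Fin (n + 1) → ℝ) :
    mink n (c • x) z = c * mink n x z := by
  simp only [mink, Pi.smul_apply, smul_eq_mul, mul_assoc, ← Finset.mul_sum]; ring

theorem mink_add_right' (n : ℕ) (x y z : Fin (n + 1) → ℝ) :
    mink n z (x + y) = mink n z x + mink n z y := by
  rw [mink_comm', mink_add_left', mink_comm' n x, mink_comm' n y]

theorem mink_smul_right' (n : ℕ) (c : ℝ) (x z : Fin (n + 1) → ℝ) :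
    mink n z (c • x) = c * mink n z x := by
  rw [mink_comm', mink_smul_left', mink_comm' n x]

/-- Index theorem: a null vector orthogonal to a positive vector vanishes. -/
theorem mink_index (n : ℕ) (M Z : Fin (n + 1) → ℝ) (hM : 0 < mink n M M)
    (hMZ : mink n M Z = 0) (hZ : mink n Z Z = 0) : Z = 0 := by
  have cs := Finset.sum_mul_sq_le_sq_mul_sq (Finset.Ioi (0 : Fin (n + 1))) M Z
  simp only [mink, ← pow_two] at hM hMZ hZ
  rw [← sub_eq_zero.mp hMZ, ← sub_eq_zero.mp hZ] at cs
  have h0 : Z 0 = 0 := by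
    by_contra h
    have : 0 < Z 0 ^ 2 := by positivity
    nlinarith [mul_pos hM this]
  have hs : ∑ i ∈ Finset.Ioi (0 : Fin (n + 1)), Z i ^ 2 = 0 := by
    rw [← sub_eq_zero.mp hZ, h0]; norm_num
  rw [Finset.sum_eq_zero_iff_of_nonneg (fun i _ => sq_nonneg _)] at hs
  funext i
  rcases eq_or_ne i 0 with rfl | hi
  · exact h0
  · exact pow_eq_zero_iff (two_ne_zero) |>.mp (hs i (Finset.mem_Ioi.mpr (Fin.pos_of_ne_zero hi)))

/-- Proposition 3.7 (case k = 11, component of genus 2 and self-intersection −2):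
`Γ₁ ≡ −2K_W + F + 2G + N₀`. -/
theorem case11_genus2_neg2_component (n : ℕ) (K D F G N Γ : Fin (n + 1) → ℝ)
    (hKK : mink n K K = -4) (hKD : mink n K D = 0) (hDD : mink n D D = 14)
    (hKF : mink n K F = -2) (hDF : mink n D F = 4) (hFF : mink n F F = 0)
    (hKG : mink n K G = -1) (hDG : mink n D G = 1) (hGG : mink n G G = -1)
    (hFG : mink n F G = 0)
    (hKN : mink n K N = 0) (hDN : mink n D N = 0) (hFN : mink n F N = 0)
    (hGN : mink n G N = 1) (hNN : mink n N N = -2)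
    (hKΓ : mink n K Γ = 4) (hDΓ : mink n D Γ = 6) (hFΓ : mink n F Γ = 4)
    (hGΓ : mink n G Γ = 1) (hNΓ : mink n N Γ = 0) (hΓΓ : mink n Γ Γ = -2) :
    Γ = -(2 • K) + F + 2 • G + N := by
  have key : Γ + (2 : ℝ) • K + (-1 : ℝ) • F + (-2 : ℝ) • G + (-1 : ℝ) • N = 0 := by
    apply mink_index n (K + D)
    all_goals
      simp only [mink_add_left', mink_add_right', mink_smul_left', mink_smul_right',
        mink_comm' n D K, mink_comm' n F K, mink_comm' n G K, mink_comm' n N K, mink_comm' n Γ K,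
        mink_comm' n G F, mink_comm' n N F, mink_comm' n Γ F, mink_comm' n N G,
        mink_comm' n Γ G, mink_comm' n Γ N, hKK, hKD, hDD, hKF, hDF, hFF, hKG, hDG, hGG, hFG,
        hKN, hDN, hFN, hGN, hNN, hKΓ, hDΓ, hFΓ, hGΓ, hNΓ, hΓΓ]
      norm_num
  funext i
  have := congrFun key i
  simp at this ⊢
  linarith
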